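/- Consider the Random Walk Metropolis–Hastings chain on ℝ with standard Cauchy target density π(x) = 1/(π(1+x²)) and proposal Uniform[x−1, x+1], i.e. the kernel P(x, A) = (1/2)·∫_{x−1}^{x+1} min(π(y)/π(x), 1)·1_A(y) dy + R(x)·1_A(x), where R(x) = 1 − (1/2)·∫_{x−1}^{x+1} min(π(y)/π(x), 1) dy is the rejection probability. Then: (1) R(x) ≤ 3/4 for every x ∈ ℝ, so sup_x R(x) < 1; (2) for every x₀ ∈ ℝ and every n ≥ 1, ‖P^n(x₀,·) − π‖_TV ≥ 1/(2π(|x₀| + n)); consequently, for every x₀ there exist no r ∈ (0,1) and constant C(x₀) with ‖P^n(x₀,·) − π‖_TV ≤ C(x₀)·r^n for all n ≥ 1, i.e. the chain is not geometrically ergodic even though the rejection probability is bounded away from 1. -/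

import Mathlib

open MeasureTheory

/-- Total variation distance between two measures. -/
noncomputable def tvDist {X : Type*} [MeasurableSpace X] (μ ν : Measure X) : ℝ :=
  ⨆ A : {s : Set X // MeasurableSet s}, |(μ A.1).toReal - (ν A.1).toReal|

/-- `n`-step kernel (n-fold composition) of a Markov kernel. -/
noncomputable def kiter {X : Type*} [MeasurableSpace X] (P : X → Measure X) : ℕ → X → Measure X
  | 0, x => Measure.dirac x
  | (n + 1), x => (kiter P n x).bind P

/-- The measure with density `f` with respect to Lebesgue measure. -/
noncomputable def densityMeasure {X : Type*} [MeasureSpace X] (f : X → ℝ) : Measure X :=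
  (volume : Measure X).withDensity fun y => ENNReal.ofReal (f y)

/-- Rejection probability of the RWMH chain with target density `tgt` and proposal
`Uniform[x − δ, x + δ]`. -/
noncomputable def rwmhR (tgt : ℝ → ℝ) (δ : ℝ) (x : ℝ) : ℝ :=
  1 - (1 / (2 * δ)) * ∫ y in (x - δ)..(x + δ), min (tgt y / tgt x) 1

/-- Transition kernel of the RWMH chain with target density `tgt` and proposal
`Uniform[x − δ, x + δ]`. -/
noncomputable def rwmhP (tgt : ℝ → ℝ) (δ : ℝ) (x : ℝ) : Measure ℝ :=
  (volume : Measure ℝ).withDensity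
      (fun y => ENNReal.ofReal
        ((1 / (2 * δ)) * (Set.Icc (x - δ) (x + δ)).indicator (fun z => min (tgt z / tgt x) 1) y))
    + ENNReal.ofReal (rwmhR tgt δ x) • Measure.dirac x

/-- The standard Cauchy density `x ↦ 1/(π(1 + x²))`. -/
noncomputable def cauchyTgt : ℝ → ℝ := fun x => 1 / (Real.pi * (1 + x ^ 2))

/-!
Each step of the chain moves by at most `1`, so after `n` steps it is still in
`[-(|x₀| + n), |x₀| + n]`, whereas the Cauchy law gives the half-line beyond `|x₀| + n` a mass
which decays only like `1 / n`; total variation therefore cannot decay geometrically. The chain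
nevertheless moves with probability at least `1 / 4`: on the half of the proposal window which
points towards the origin the density is at least half its value at the current state.
-/

open Filter Metric Set Topology

lemma eventually_mul_pow_lt_one_div {r c : ℝ} (hr : |r| < 1) (hc : 0 < c) (a C : ℝ) :
    ∀ᶠ n : ℕ in atTop, C * r ^ n < 1 / (c * (a + n)) := by
  have h_lim : Tendsto (fun n : ℕ ↦ C * c * (a * r ^ n + n * r ^ n)) atTop (𝓝 0) := by
    simpa using (((tendsto_pow_atTop_nhds_zero_of_abs_lt_one hr).const_mul a).add
      (tendsto_self_mul_const_pow_of_abs_lt_one hr)).const_mul (C * c)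
  have h_pos : ∀ᶠ n : ℕ in atTop, 0 < a + n :=
    (tendsto_atTop_add_const_left _ a tendsto_natCast_atTop_atTop).eventually_gt_atTop 0
  filter_upwards [h_lim.eventually_lt_const one_pos, h_pos] with n h_lt hn
  rw [lt_div_iff₀ (by positivity)]
  linarith

lemma measureReal_densityMeasure {X : Type*} [MeasureSpace X] {f : X → ℝ}
    (hf : AEStronglyMeasurable f) (hf₀ : ∀ x, 0 ≤ f x) {s : Set X} (hs : MeasurableSet s) :
    (densityMeasure f).real s = ∫ x in s, f x := by
  rw [measureReal_def, densityMeasure, withDensity_apply _ hs,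
    integral_eq_lintegral_of_nonneg_ae (ae_of_all _ hf₀) hf.restrict]

section TotalVariation

variable {X : Type*} [MeasurableSpace X] {μ ν : Measure X} [IsFiniteMeasure μ] [IsFiniteMeasure ν]

lemma abs_measureReal_sub_le_tvDist {s : Set X} (hs : MeasurableSet s) :
    |μ.real s - ν.real s| ≤ tvDist μ ν := by
  refine le_ciSup (f := fun A : {s : Set X // MeasurableSet s} ↦ |μ.real A.1 - ν.real A.1|)
    ⟨max (μ.real univ) (ν.real univ), ?_⟩ ⟨s, hs⟩
  rintro _ ⟨A, rfl⟩
  simpa using abs_sub_le_of_le_of_le measureReal_nonneg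
    (le_max_of_le_left (measureReal_mono (μ := μ) (subset_univ A.1))) measureReal_nonneg
    (le_max_of_le_right (measureReal_mono (μ := ν) (subset_univ A.1)))

lemma measureReal_le_tvDist_of_null {s : Set X} (hs : MeasurableSet s) (hμs : μ s = 0) :
    ν.real s ≤ tvDist μ ν := by
  simpa [measureReal_def, hμs] using abs_measureReal_sub_le_tvDist (μ := μ) (ν := ν) hs

end TotalVariation

section Kernel

variable {X : Type*} [MeasurableSpace X] {P : X → Measure X}

lemma kiter_univ_le_one (hP : ∀ x, P x univ ≤ 1) (n : ℕ) (x : X) : kiter P n x univ ≤ 1 := by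
  induction n with
  | zero => exact prob_le_one (μ := Measure.dirac x)
  | succ n ih =>
    calc kiter P (n + 1) x univ
        ≤ ∫⁻ y, P y univ ∂kiter P n x := Measure.bind_apply_le P .univ
      _ ≤ ∫⁻ _, 1 ∂kiter P n x := lintegral_mono hP
      _ ≤ 1 := by rwa [lintegral_one]

variable [PseudoMetricSpace X] [OpensMeasurableSpace X] {δ : ℝ}

lemma kiter_compl_closedBall (hP : ∀ x, P x (closedBall x δ)ᶜ = 0) (n : ℕ) (x : X) :
    kiter P n x (closedBall x (n * δ))ᶜ = 0 := by
  induction n with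
  | zero => simp [kiter, Measure.dirac_apply' _ isClosed_closedBall.measurableSet.compl]
  | succ n ih =>
    have h_step : ∀ᵐ y ∂kiter P n x, P y (closedBall x ((n + 1 : ℕ) * δ))ᶜ = 0 := by
      filter_upwards [mem_ae_iff.2 ih] with y hy
      refine measure_mono_null (compl_subset_compl.2 (closedBall_subset_closedBall' ?_)) (hP y)
      rw [mem_closedBall] at hy
      push_cast
      linarith
    refine le_antisymm ?_ zero_le
    calc kiter P (n + 1) x (closedBall x ((n + 1 : ℕ) * δ))ᶜ
        ≤ ∫⁻ y, P y (closedBall x ((n + 1 : ℕ) * δ))ᶜ ∂kiter P n x :=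
          Measure.bind_apply_le P isClosed_closedBall.measurableSet.compl
      _ = 0 := by rw [lintegral_congr_ae h_step, lintegral_zero]

lemma measureReal_compl_closedBall_le_tvDist_kiter (hP₁ : ∀ x, P x univ ≤ 1)
    (hP : ∀ x, P x (closedBall x δ)ᶜ = 0) (ν : Measure X) [IsFiniteMeasure ν] (n : ℕ) (x : X) :
    ν.real (closedBall x (n * δ))ᶜ ≤ tvDist (kiter P n x) ν := by
  have : IsFiniteMeasure (kiter P n x) := ⟨(kiter_univ_le_one hP₁ n x).trans_lt ENNReal.one_lt_top⟩
  exact measureReal_le_tvDist_of_null isClosed_closedBall.measurableSet.compl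
    (kiter_compl_closedBall hP n x)

end Kernel

section RandomWalkMetropolis

variable {f : ℝ → ℝ} {δ : ℝ}

lemma rwmhP_compl_closedBall (f : ℝ → ℝ) (hδ : 0 ≤ δ) (x : ℝ) :
    rwmhP f δ x (closedBall x δ)ᶜ = 0 := by
  have h_meas : MeasurableSet (closedBall x δ)ᶜ := isClosed_closedBall.measurableSet.compl
  rw [rwmhP, ← Real.closedBall_eq_Icc, Measure.add_apply, withDensity_apply _ h_meas,
    Measure.smul_apply, Measure.dirac_apply' _ h_meas,
    indicator_of_notMem (not_not.2 (mem_closedBall_self hδ)), smul_zero, add_zero]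
  refine setLIntegral_eq_zero h_meas fun y hy ↦ ?_
  rw [indicator_of_notMem hy, mul_zero, ENNReal.ofReal_zero, Pi.zero_apply]

lemma min_div_one_nonneg (hf₀ : ∀ x, 0 ≤ f x) (x y : ℝ) : 0 ≤ min (f y / f x) 1 :=
  le_min (div_nonneg (hf₀ y) (hf₀ x)) zero_le_one

lemma intervalIntegrable_min_div_one (hf : Measurable f) (hf₀ : ∀ x, 0 ≤ f x) (x a b : ℝ) :
    IntervalIntegrable (fun y ↦ min (f y / f x) 1) volume a b := by
  refine (intervalIntegrable_const (c := (1 : ℝ))).mono_fun'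
    ((hf.div_const _).min measurable_const).aestronglyMeasurable (ae_of_all _ fun y ↦ ?_)
  exact (Real.norm_of_nonneg (min_div_one_nonneg hf₀ x y)).trans_le (min_le_right _ _)

lemma rwmhR_le_one (hf₀ : ∀ x, 0 ≤ f x) (hδ : 0 ≤ δ) (x : ℝ) : rwmhR f δ x ≤ 1 := by
  have h_int : 0 ≤ ∫ y in (x - δ)..(x + δ), min (f y / f x) 1 :=
    intervalIntegral.integral_nonneg (by linarith) fun y _ ↦ min_div_one_nonneg hf₀ x y
  exact sub_le_self _ (by positivity)

lemma rwmhR_nonneg (hf : Measurable f) (hf₀ : ∀ x, 0 ≤ f x) (hδ : 0 < δ) (x : ℝ) :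
    0 ≤ rwmhR f δ x := by
  have h_int : ∫ y in (x - δ)..(x + δ), min (f y / f x) 1 ≤ ∫ _ in (x - δ)..(x + δ), 1 :=
    intervalIntegral.integral_mono_on (by linarith) (intervalIntegrable_min_div_one hf hf₀ x _ _)
      intervalIntegrable_const fun y _ ↦ min_le_right _ _
  rw [intervalIntegral.integral_const, smul_eq_mul, mul_one, add_sub_sub_cancel, ← two_mul]
    at h_int
  rw [rwmhR, sub_nonneg, one_div_mul_eq_div]
  exact div_le_one_of_le₀ h_int (by positivity)

lemma lintegral_proposal_density (hf : Measurable f) (hf₀ : ∀ x, 0 ≤ f x) (hδ : 0 ≤ δ) (x : ℝ) :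
    ∫⁻ y, ENNReal.ofReal
        ((1 / (2 * δ)) * (Icc (x - δ) (x + δ)).indicator (fun z ↦ min (f z / f x) 1) y) =
      ENNReal.ofReal (1 - rwmhR f δ x) := by
  have h_le : x - δ ≤ x + δ := by linarith
  have h_int : IntegrableOn (fun z ↦ min (f z / f x) 1) (Icc (x - δ) (x + δ)) :=
    (intervalIntegrable_iff_integrableOn_Icc_of_le h_le).1
      (intervalIntegrable_min_div_one hf hf₀ x _ _)
  rw [← ofReal_integral_eq_lintegral_ofReal
    ((h_int.integrable_indicator measurableSet_Icc).const_mul _) (ae_of_all _ fun y ↦ ?_)]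
  · rw [integral_const_mul, integral_indicator measurableSet_Icc, integral_Icc_eq_integral_Ioc,
      ← intervalIntegral.integral_of_le h_le, rwmhR, sub_sub_cancel]
  · exact mul_nonneg (by positivity) (indicator_nonneg (fun z _ ↦ min_div_one_nonneg hf₀ x z) y)

lemma rwmhP_univ (hf : Measurable f) (hf₀ : ∀ x, 0 ≤ f x) (hδ : 0 < δ) (x : ℝ) :
    rwmhP f δ x univ = 1 := by
  rw [rwmhP, Measure.add_apply, withDensity_apply _ .univ, Measure.restrict_univ,
    lintegral_proposal_density hf hf₀ hδ.le, Measure.smul_apply, measure_univ, smul_eq_mul,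
    mul_one, ← ENNReal.ofReal_add (sub_nonneg.2 (rwmhR_le_one hf₀ hδ.le x))
      (rwmhR_nonneg hf hf₀ hδ x), sub_add_cancel, ENNReal.ofReal_one]

lemma rwmhR_le_of_forall_le_div (hf : Measurable f) (hf₀ : ∀ x, 0 ≤ f x) {a b c x : ℝ}
    (hc : c ≤ 1) (ha : x - δ ≤ a) (hab : a ≤ b) (hb : b ≤ x + δ)
    (h : ∀ y ∈ Icc a b, c ≤ f y / f x) :
    rwmhR f δ x ≤ 1 - 1 / (2 * δ) * ((b - a) * c) := by
  have hδ : 0 ≤ δ := by linarith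
  refine sub_le_sub_left (mul_le_mul_of_nonneg_left ?_ (by positivity)) 1
  calc (b - a) * c = ∫ _ in a..b, c := by rw [intervalIntegral.integral_const, smul_eq_mul]
    _ ≤ ∫ y in a..b, min (f y / f x) 1 :=
      intervalIntegral.integral_mono_on hab intervalIntegrable_const
        (intervalIntegrable_min_div_one hf hf₀ x a b) fun y hy ↦ le_min (h y hy) hc
    _ ≤ ∫ y in (x - δ)..(x + δ), min (f y / f x) 1 :=
      intervalIntegral.integral_mono_interval ha hab hb
        (ae_of_all _ fun y ↦ min_div_one_nonneg hf₀ x y)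
        (intervalIntegrable_min_div_one hf hf₀ x _ _)

end RandomWalkMetropolis

section Cauchy

lemma cauchyTgt_eq_cauchyPDFReal : cauchyTgt = ProbabilityTheory.cauchyPDFReal 0 1 := by
  ext x
  simp [cauchyTgt, ProbabilityTheory.cauchyPDFReal, add_comm, mul_comm]

lemma measurable_cauchyTgt : Measurable cauchyTgt :=
  cauchyTgt_eq_cauchyPDFReal ▸ ProbabilityTheory.measurable_cauchyPDFReal 0 1

lemma cauchyTgt_nonneg (x : ℝ) : 0 ≤ cauchyTgt x := by
  rw [cauchyTgt]
  positivity

lemma integrable_cauchyTgt : Integrable cauchyTgt :=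
  cauchyTgt_eq_cauchyPDFReal ▸ ProbabilityTheory.integrable_cauchyPDFReal 0

lemma half_le_cauchyTgt_div {x y : ℝ} (h : |y| ≤ max |x| 1) :
    1 / 2 ≤ cauchyTgt y / cauchyTgt x := by
  have h_ratio : cauchyTgt y / cauchyTgt x = (1 + x ^ 2) / (1 + y ^ 2) := by
    simp only [cauchyTgt]
    field_simp
  have h_sq : y ^ 2 ≤ 1 + x ^ 2 := by
    rcases le_max_iff.1 h with h | h
    · linarith [sq_le_sq.2 h]
    · linarith [(sq_le_one_iff_abs_le_one y).2 h, sq_nonneg x]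
  rw [h_ratio, div_le_div_iff₀ two_pos (by positivity)]
  linarith [sq_nonneg x]

lemma rwmhR_cauchyTgt_le (x : ℝ) : rwmhR cauchyTgt 1 x ≤ 3 / 4 := by
  have h_bound : ∀ a : ℝ, x - 1 ≤ a → a ≤ x → (∀ y ∈ Icc a (a + 1), |y| ≤ max |x| 1) →
      rwmhR cauchyTgt 1 x ≤ 3 / 4 := fun a ha hax h ↦ by
    refine (rwmhR_le_of_forall_le_div measurable_cauchyTgt cauchyTgt_nonneg
      (c := 1 / 2) (by norm_num) ha (by linarith) (by linarith : a + 1 ≤ x + 1)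
      fun y hy ↦ half_le_cauchyTgt_div (h y hy)).trans_eq ?_
    ring
  rcases le_total 0 x with hx | hx
  · refine h_bound (x - 1) le_rfl (by linarith) fun y hy ↦ abs_le.2 ?_
    rw [abs_of_nonneg hx]
    constructor <;> linarith [hy.1, hy.2, le_max_left x 1, le_max_right x 1]
  · refine h_bound x (by linarith) le_rfl fun y hy ↦ abs_le.2 ?_
    rw [abs_of_nonpos hx]
    constructor <;> linarith [hy.1, hy.2, le_max_left (-x) 1, le_max_right (-x) 1]

lemma one_div_le_integral_Ioi_cauchyTgt {M : ℝ} (hM : 1 ≤ M) :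
    1 / (2 * Real.pi * M) ≤ ∫ x in Ioi M, cauchyTgt x := by
  have hM₀ : 0 < M := one_pos.trans_le hM
  have h_le : ∀ x ∈ Ioi M, (2 * Real.pi)⁻¹ * x ^ (-2 : ℝ) ≤ cauchyTgt x := fun x hx ↦ by
    have hx₁ : 1 ≤ x := hM.trans (le_of_lt hx)
    rw [Real.rpow_neg (by linarith), Real.rpow_two, ← mul_inv, cauchyTgt, one_div]
    refine inv_anti₀ (by positivity) ?_
    rw [mul_comm 2, mul_assoc]
    gcongr
    nlinarith
  calc 1 / (2 * Real.pi * M) = ∫ x in Ioi M, (2 * Real.pi)⁻¹ * x ^ (-2 : ℝ) := by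
        rw [integral_const_mul, integral_Ioi_rpow_of_lt (by norm_num) hM₀]
        norm_num [Real.rpow_neg_one, mul_comm]
    _ ≤ ∫ x in Ioi M, cauchyTgt x :=
        setIntegral_mono_on ((integrableOn_Ioi_rpow_of_lt (by norm_num) hM₀).const_mul _)
          integrable_cauchyTgt.integrableOn measurableSet_Ioi h_le

lemma one_div_le_tvDist_kiter_cauchyTgt (x₀ : ℝ) {n : ℕ} (hn : 1 ≤ n) :
    1 / (2 * Real.pi * (|x₀| + n)) ≤
      tvDist (kiter (rwmhP cauchyTgt 1) n x₀) (densityMeasure cauchyTgt) := by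
  have : IsFiniteMeasure (densityMeasure cauchyTgt) :=
    isFiniteMeasure_withDensity_ofReal integrable_cauchyTgt.2
  have h_one_le : 1 ≤ |x₀| + n := by
    linarith [abs_nonneg x₀, (Nat.one_le_cast (α := ℝ)).2 hn]
  have h_subset : Ioi (|x₀| + n) ⊆ (closedBall x₀ (n * 1))ᶜ := fun y hy hy' ↦ by
    rw [Real.closedBall_eq_Icc, mul_one] at hy'
    linarith [mem_Ioi.1 hy, hy'.2, le_abs_self x₀]
  calc 1 / (2 * Real.pi * (|x₀| + n))
      ≤ ∫ x in Ioi (|x₀| + n), cauchyTgt x := one_div_le_integral_Ioi_cauchyTgt h_one_le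
    _ = (densityMeasure cauchyTgt).real (Ioi (|x₀| + n)) :=
        (measureReal_densityMeasure measurable_cauchyTgt.aestronglyMeasurable cauchyTgt_nonneg
          measurableSet_Ioi).symm
    _ ≤ (densityMeasure cauchyTgt).real (closedBall x₀ (n * 1))ᶜ := measureReal_mono h_subset
    _ ≤ tvDist (kiter (rwmhP cauchyTgt 1) n x₀) (densityMeasure cauchyTgt) :=
        measureReal_compl_closedBall_le_tvDist_kiter
          (fun x ↦ (rwmhP_univ measurable_cauchyTgt cauchyTgt_nonneg one_pos x).le)
          (rwmhP_compl_closedBall cauchyTgt zero_le_one) _ n x₀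

end Cauchy

/-- for the RWMH chain with standard Cauchy target and proposal
`Uniform[x−1, x+1]`:
(1) `R(x) ≤ 3/4` for every `x`, so the rejection probability is bounded away from `1`;
(2) `‖Pⁿ(x₀,·) − π‖_TV ≥ 1/(2π(|x₀| + n))` for every `x₀` and `n ≥ 1`;
consequently the chain is not geometrically ergodic: for every `x₀` there are no `r ∈ (0,1)`
and constant `C(x₀) ≥ 0` with `‖Pⁿ(x₀,·) − π‖_TV ≤ C(x₀)·rⁿ` for all `n ≥ 1`. -/
theorem rwmh_cauchy_not_geometrically_ergodic :
    (∀ x : ℝ, rwmhR cauchyTgt 1 x ≤ 3 / 4)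
    ∧ (∀ x₀ : ℝ, ∀ n : ℕ, 1 ≤ n →
        1 / (2 * Real.pi * (|x₀| + n)) ≤
          tvDist (kiter (rwmhP cauchyTgt 1) n x₀) (densityMeasure cauchyTgt))
    ∧ (∀ x₀ : ℝ, ¬ ∃ (r : ℝ) (C : ℝ), 0 < r ∧ r < 1 ∧ 0 ≤ C ∧
        ∀ n : ℕ, 1 ≤ n →
          tvDist (kiter (rwmhP cauchyTgt 1) n x₀) (densityMeasure cauchyTgt) ≤ C * r ^ n) := by
  refine ⟨rwmhR_cauchyTgt_le, fun x₀ n ↦ one_div_le_tvDist_kiter_cauchyTgt x₀, ?_⟩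
  rintro x₀ ⟨r, C, hr₀, hr₁, -, h_geom⟩
  have h_decay : ∀ᶠ n : ℕ in atTop, C * r ^ n < 1 / (2 * Real.pi * (|x₀| + n)) :=
    eventually_mul_pow_lt_one_div (by rwa [abs_of_pos hr₀]) Real.two_pi_pos |x₀| C
  obtain ⟨n, h_lt, hn⟩ := (h_decay.and (eventually_ge_atTop 1)).exists
  exact h_lt.not_ge ((one_div_le_tvDist_kiter_cauchyTgt x₀ hn).trans (h_geom n hn))
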